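/- Let L be a finite-dimensional solvable Leibniz algebra over a field F such that every two-generated proper subalgebra of L is strongly solvable. Then every proper subalgebra of L is strongly solvable. -/

import Mathlib

/-!
Basic theory of (left) Leibniz algebras, formalized over an arbitrary field `F`.
A Leibniz algebra structure on an `F`-vector space `L` is given by a bilinear
multiplication `m : L →ₗ[F] L →ₗ[F] L` satisfying the left Leibniz identity.
-/

open Submodule Module

section LeibnizDefs

variable {F : Type*} [Field F] {L : Type*} [AddCommGroup L] [Module F L]
variable (m : L →ₗ[F] L →ₗ[F] L)

/-- The left Leibniz identity: `a(bc) = (ab)c + b(ac)`. -/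
def IsLeibniz : Prop :=
  ∀ a b c : L, m a (m b c) = m (m a b) c + m b (m a c)

/-- The multiplication is antisymmetric, i.e. the algebra is a Lie algebra. -/
def IsLie : Prop := ∀ a b : L, m a b = - m b a

/-- The product of two subspaces: the span of all products `x·y`, `x ∈ P`, `y ∈ Q`. -/
abbrev mprod (P Q : Submodule F L) : Submodule F L := Submodule.map₂ m P Q

/-- A subalgebra: a subspace closed under multiplication. -/
def IsSubalg (S : Submodule F L) : Prop := ∀ x ∈ S, ∀ y ∈ S, m x y ∈ S

/-- An ideal of `L`: a subspace `I` with `L·I ⊆ I` and `I·L ⊆ I`. -/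
def IsIdeal (I : Submodule F L) : Prop :=
  ∀ (x : L), ∀ y ∈ I, m x y ∈ I ∧ m y x ∈ I

/-- An ideal `I` of a subalgebra `S`. -/
def IsIdealOf (S I : Submodule F L) : Prop :=
  I ≤ S ∧ ∀ x ∈ S, ∀ y ∈ I, m x y ∈ I ∧ m y x ∈ I

/-- A minimal ideal: a nonzero ideal containing no nonzero proper subideal of `L`. -/
def IsMinIdeal (A : Submodule F L) : Prop :=
  IsIdeal m A ∧ A ≠ ⊥ ∧ ∀ J, IsIdeal m J → J ≤ A → J = ⊥ ∨ J = A

/-- The derived series of a subspace: `S^(0) = S`, `S^(n+1) = S^(n)·S^(n)`. -/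
def derSeries (S : Submodule F L) : ℕ → Submodule F L
  | 0 => S
  | n + 1 => mprod m (derSeries S n) (derSeries S n)

/-- A subalgebra is solvable if its derived series reaches `0`. -/
def IsSolvableSub (S : Submodule F L) : Prop := ∃ n, derSeries m S n = ⊥

/-- The Leibniz algebra `L` is solvable. -/
abbrev IsSolvableAlg : Prop := IsSolvableSub m (⊤ : Submodule F L)

/-- The lower central series of a subspace: `N^1 = N`, `N^(k+1) = N·N^k`. -/
def lcSeries (N : Submodule F L) : ℕ → Submodule F L
  | 0 => N
  | k + 1 => mprod m N (lcSeries N k)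

/-- A subalgebra is nilpotent if its lower central series reaches `0`. -/
def IsNilpotentSub (N : Submodule F L) : Prop := ∃ k, lcSeries m N k = ⊥

/-- A subalgebra `S` is strongly solvable if `S² = S·S` is nilpotent. -/
def IsStronglySolvable (S : Submodule F L) : Prop :=
  IsNilpotentSub m (mprod m S S)

/-- A maximal subalgebra: a proper subalgebra not contained in any larger proper
subalgebra. -/
def IsMaxSubalg (S : Submodule F L) : Prop :=
  IsSubalg m S ∧ S ≠ ⊤ ∧ ∀ T, IsSubalg m T → S ≤ T → T = S ∨ T = ⊤

/-- The Frattini subalgebra `F(L)`: the intersection of all maximal subalgebras. -/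
def frattiniSub : Submodule F L := sInf {S | IsMaxSubalg m S}

/-- The Frattini ideal `φ(L)`: the largest ideal contained in the Frattini
subalgebra. -/
def frattiniIdeal : Submodule F L :=
  sSup {I | IsIdeal m I ∧ I ≤ frattiniSub m}

/-- `Leib(L)`: the span of all squares `x·x`. -/
def leibIdeal : Submodule F L := Submodule.span F {z | ∃ x : L, z = m x x}

/-- The subalgebra generated by a set. -/
def genBy (s : Set L) : Submodule F L := sInf {S | IsSubalg m S ∧ s ⊆ S}

/-- A subalgebra is two-generated if it is generated as an algebra by two elements. -/
def TwoGenerated (S : Submodule F L) : Prop := ∃ x y : L, genBy m {x, y} = S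

/-- A subalgebra `S` is supersolvable if there is a chain of ideals of `S`,
`0 = S₀ ⊂ S₁ ⊂ ⋯ ⊂ Sₙ = S`, with `dim Sᵢ = i`. -/
def IsSupersolvable (S : Submodule F L) : Prop :=
  ∃ (n : ℕ) (c : ℕ → Submodule F L), c 0 = ⊥ ∧ c n = S ∧
    (∀ i, i < n → c i ≤ c (i + 1)) ∧
    (∀ i, i ≤ n → IsIdealOf m S (c i)) ∧
    (∀ i, i ≤ n → Module.finrank F (c i) = i)

/-- A subspace `S` is nil on `L` if left multiplication by each of its elements is a
nilpotent operator. -/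
def IsNilOn (S : Submodule F L) : Prop :=
  ∀ x ∈ S, IsNilpotent (m x : Module.End F L)

open scoped TensorProduct in
/-- A subspace `S` is triangulable on `L` if, after extending scalars to the algebraic
closure `K` of `F`, the space `K ⊗ L` admits a basis with respect to which the left
multiplication operators by all elements of `K ⊗ S` are upper triangular matrices.
(Since upper triangular matrices form a `K`-subspace of matrices, it suffices that the
base-changed left multiplication by each `x ∈ S` is upper triangular.) -/
def IsTriangulableOn (S : Submodule F L) : Prop :=
  ∃ (n : ℕ) (b : Basis (Fin n) (AlgebraicClosure F) ((AlgebraicClosure F) ⊗[F] L)),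
    ∀ x ∈ S, ∀ i j : Fin n, j < i →
      LinearMap.toMatrix b b (LinearMap.baseChange (AlgebraicClosure F) (m x)) i j = 0

end LeibnizDefs

/-!
By passing to a subalgebra and to quotients by minimal ideals, the claim reduces to a solvable
algebra `L` with an abelian minimal ideal `A` containing some term `(L²)^k`, all of whose
two-generated subalgebras are strongly solvable. The left action of `L` on `A` is irreducible. If
`L²` acts nontrivially, let `Z` be the last term of the lower central series of `L²` that still
does: its elements act on `A` by commuting operators, each nilpotent or injective by Fitting's
lemma, and some product `xy ∈ Z` must act injectively. Now `dim (A × A) > dim A` provides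
`(a, b) ≠ 0` in `A × A` with `xb + ay = 0`, so `(x + a)(y + b) = xy`. In a strongly solvable
subalgebra `T = ⟨u, v⟩` with `uv = xy` the element `uv` acts nilpotently, hence `T ∩ A = 0`, while
`(uv)^(k+1)` maps `T` into `A`. So `(xy)^(k+1)` kills `x`, `y`, `x + a` and `y + b`, which forces
`a = b = 0`.
-/

section Endomorphisms

variable {R V : Type*} [AddCommGroup V]

theorem disjoint_ker_pow [Ring R] [Module R V] {f : End R V} {W : Submodule R V}
    (hW : ∀ w ∈ W, f w ∈ W) (hf : Disjoint W (LinearMap.ker f)) (n : ℕ) :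
    Disjoint W (LinearMap.ker (f ^ n)) := by
  rw [LinearMap.disjoint_ker] at hf ⊢
  intro w hw hfw
  induction n with
  | zero => exact hfw
  | succ n ih =>
    rw [pow_succ', Module.End.mul_apply] at hfw
    exact ih (hf _ (Module.End.pow_apply_mem_of_forall_mem n hW w hw) hfw)

theorem exists_ne_zero_forall_apply_eq_zero [CommRing R] [Module R V] [IsArtinian R V]
    [Nontrivial V] {s : Set (End R V)} (hcomm : ∀ f ∈ s, ∀ g ∈ s, Commute f g)
    (hnil : ∀ f ∈ s, f.maxGenEigenspace 0 = ⊤) : ∃ v ≠ 0, ∀ f ∈ s, f v = 0 := by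
  obtain ⟨W, ⟨hW0, hWs⟩, hWmin⟩ := exists_minimal_of_wellFoundedLT
    (fun W : Submodule R V => W ≠ ⊥ ∧ ∀ f ∈ s, ∀ w ∈ W, f w ∈ W)
    ⟨⊤, top_ne_bot, fun _ _ _ _ => trivial⟩
  obtain ⟨v, hv, hv0⟩ := Submodule.exists_mem_ne_zero_of_ne_bot hW0
  have hW_le_ker : ∀ f ∈ s, W ≤ LinearMap.ker f := by
    intro f hf
    have hne : W ⊓ LinearMap.ker f ≠ ⊥ := by
      intro hbot
      have hv_mem : v ∈ f.maxGenEigenspace 0 := hnil f hf ▸ trivial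
      obtain ⟨n, hn⟩ := (f.mem_maxGenEigenspace 0 v).1 hv_mem
      rw [zero_smul, sub_zero] at hn
      exact hv0 (LinearMap.disjoint_ker.1
        (disjoint_ker_pow (hWs f hf) (disjoint_iff.2 hbot) n) v hv hn)
    have hstable : ∀ g ∈ s, ∀ w ∈ W ⊓ LinearMap.ker f, g w ∈ W ⊓ LinearMap.ker f := by
      rintro g hg w ⟨hw, hfw⟩
      refine ⟨hWs g hg w hw, ?_⟩
      rw [SetLike.mem_coe, LinearMap.mem_ker] at hfw ⊢
      rw [← Module.End.mul_apply, hcomm f hf g hg, Module.End.mul_apply, hfw, map_zero]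
    exact (hWmin ⟨hne, hstable⟩ inf_le_left).trans inf_le_right
  exact ⟨v, hv0, fun f hf => hW_le_ker f hf hv⟩

theorem mapsTo_maxGenEigenspace_of_commute_commutator [CommRing R] [Module R V] {f g : End R V}
    (h : Commute f (f * g - g * f)) (μ : R) :
    Set.MapsTo g (f.maxGenEigenspace μ) (f.maxGenEigenspace μ) := by
  set N : End R V := f - μ • 1 with hN
  have hcomm : Commute N (f * g - g * f) := h.sub_left ((Commute.one_left _).smul_left μ)
  have hNg : N * g = g * N + (f * g - g * f) := by
    rw [hN, sub_mul, mul_sub, smul_mul_assoc, mul_smul_comm, one_mul, mul_one]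
    abel
  have hpow : ∀ n v, (N ^ n) v = 0 → (N ^ (n + 1)) (g v) = 0 := by
    intro n
    induction n with
    | zero =>
      intro v hv
      rw [show v = 0 from hv, map_zero, map_zero]
    | succ n ih =>
      intro v hv
      have hNv : (N ^ (n + 1)) (g (N v)) = 0 :=
        ih (N v) (by rwa [← Module.End.mul_apply, ← pow_succ])
      rw [pow_succ, Module.End.mul_apply, ← Module.End.mul_apply N, hNg, LinearMap.add_apply,
        map_add, Module.End.mul_apply, hNv, zero_add, ← Module.End.mul_apply,
        (hcomm.pow_left (n + 1)).eq, Module.End.mul_apply, hv, map_zero]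
  intro v hv
  obtain ⟨n, hn⟩ := (f.mem_maxGenEigenspace μ v).1 hv
  exact (f.mem_maxGenEigenspace μ (g v)).2 ⟨n + 1, hpow n v hn⟩

end Endomorphisms

section Series

variable {F L : Type*} [Field F] [AddCommGroup L] [Module F L] {m : L →ₗ[F] L →ₗ[F] L}

theorem derSeries_mono {S T : Submodule F L} (h : S ≤ T) (n : ℕ) :
    derSeries m S n ≤ derSeries m T n := by
  induction n with
  | zero => exact h
  | succ n ih => exact Submodule.map₂_le_map₂ ih ih

theorem IsSolvableSub.mono {S T : Submodule F L} (hT : IsSolvableSub m T) (h : S ≤ T) :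
    IsSolvableSub m S :=
  hT.imp fun n hn => le_bot_iff.1 ((derSeries_mono h n).trans_eq hn)

theorem IsSolvableSub.eq_bot_of_mprod_self_eq {S : Submodule F L} (hS : IsSolvableSub m S)
    (h : mprod m S S = S) : S = ⊥ := by
  obtain ⟨n, hn⟩ := hS
  have hconst : ∀ i, derSeries m S i = S := by
    intro i
    induction i with
    | zero => rfl
    | succ i ih => rw [derSeries, ih, h]
  rw [← hn, hconst n]

theorem mul_mem_mprod_top (x y : L) : m x y ∈ mprod m ⊤ ⊤ :=
  Submodule.apply_mem_map₂ m Submodule.mem_top Submodule.mem_top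

theorem lcSeries_mprod_eq_mprod (P Q : Submodule F L) (k : ℕ) :
    ∃ P' Q', lcSeries m (mprod m P Q) k = mprod m P' Q' := by
  cases k with
  | zero => exact ⟨P, Q, rfl⟩
  | succ k => exact ⟨mprod m P Q, lcSeries m (mprod m P Q) k, rfl⟩

theorem lcSeries_le {S : Submodule F L} (hS : IsSubalg m S) (k : ℕ) : lcSeries m S k ≤ S := by
  induction k with
  | zero => exact le_rfl
  | succ k ih => exact Submodule.map₂_le.2 fun x hx y hy => hS x hx y (ih hy)

theorem pow_succ_apply_mem_lcSeries_mprod {S : Submodule F L} {c t : L} (hcS : c ∈ S)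
    (hc : c ∈ mprod m S S) (ht : t ∈ S) (k : ℕ) :
    ((m c : End F L) ^ (k + 1)) t ∈ lcSeries m (mprod m S S) k := by
  induction k with
  | zero =>
    rw [zero_add, pow_one]
    exact Submodule.apply_mem_map₂ m hcS ht
  | succ k ih =>
    rw [pow_succ', Module.End.mul_apply]
    exact Submodule.apply_mem_map₂ m hc ih

end Series

section GeneratedSubalgebra

variable {F L : Type*} [Field F] [AddCommGroup L] [Module F L] (m : L →ₗ[F] L →ₗ[F] L)

theorem isSubalg_genBy (s : Set L) : IsSubalg m (genBy m s) := by
  intro x hx y hy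
  rw [genBy, Submodule.mem_sInf] at hx hy ⊢
  exact fun S hS => hS.1 x (hx S hS) y (hy S hS)

theorem subset_genBy (s : Set L) : s ⊆ genBy m s :=
  fun _ hx => Submodule.mem_sInf.2 fun _ hS => hS.2 hx

variable {m}

theorem genBy_le {s : Set L} {S : Submodule F L} (hS : IsSubalg m S) (hs : s ⊆ S) :
    genBy m s ≤ S :=
  sInf_le ⟨hS, hs⟩

theorem TwoGenerated.isSubalg {S : Submodule F L} (hS : TwoGenerated m S) : IsSubalg m S := by
  obtain ⟨x, y, rfl⟩ := hS
  exact isSubalg_genBy m _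

end GeneratedSubalgebra

section Homomorphisms

variable {F L L' : Type*} [Field F] [AddCommGroup L] [Module F L] [AddCommGroup L'] [Module F L']

/-- A linear map `f` is a homomorphism from the algebra `(L, m)` to the algebra `(L', m')`. -/
def IsAlgHom (m : L →ₗ[F] L →ₗ[F] L) (m' : L' →ₗ[F] L' →ₗ[F] L') (f : L →ₗ[F] L') : Prop :=
  ∀ x y, f (m x y) = m' (f x) (f y)

namespace IsAlgHom

variable {m : L →ₗ[F] L →ₗ[F] L} {m' : L' →ₗ[F] L' →ₗ[F] L'} {f : L →ₗ[F] L'}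

theorem map_mprod (hf : IsAlgHom m m' f) (P Q : Submodule F L) :
    (mprod m P Q).map f = mprod m' (P.map f) (Q.map f) := by
  have hcomp : m.compr₂ f = m'.compl₁₂ f f := LinearMap.ext₂ hf
  rw [mprod, Submodule.map_map₂, hcomp, mprod, Submodule.map₂_map_map]

theorem map_lcSeries (hf : IsAlgHom m m' f) (S : Submodule F L) (k : ℕ) :
    (lcSeries m S k).map f = lcSeries m' (S.map f) k := by
  induction k with
  | zero => rfl
  | succ k ih => rw [lcSeries, hf.map_mprod, ih, lcSeries]

theorem map_derSeries (hf : IsAlgHom m m' f) (S : Submodule F L) (n : ℕ) :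
    (derSeries m S n).map f = derSeries m' (S.map f) n := by
  induction n with
  | zero => rfl
  | succ n ih => rw [derSeries, hf.map_mprod, ih, derSeries]

theorem map_genBy (hf : IsAlgHom m m' f) (s : Set L) : (genBy m s).map f = genBy m' (f '' s) := by
  apply le_antisymm
  · rw [Submodule.map_le_iff_le_comap]
    refine genBy_le (fun x hx y hy => ?_) fun x hx => subset_genBy m' _ ⟨x, hx, rfl⟩
    rw [Submodule.mem_comap, hf]
    exact isSubalg_genBy m' _ _ hx _ hy
  · refine genBy_le ?_ (Set.image_mono (subset_genBy m s))
    rintro _ ⟨x, hx, rfl⟩ _ ⟨y, hy, rfl⟩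
    rw [← hf]
    exact Submodule.mem_map_of_mem (isSubalg_genBy m s x hx y hy)

theorem isSolvableSub_map (hf : IsAlgHom m m' f) {S : Submodule F L} (hS : IsSolvableSub m S) :
    IsSolvableSub m' (S.map f) :=
  hS.imp fun n hn => by rw [← hf.map_derSeries, hn, Submodule.map_bot]

theorem isSolvableSub_of_map (hf : IsAlgHom m m' f) (hinj : Function.Injective f)
    {S : Submodule F L} (hS : IsSolvableSub m' (S.map f)) : IsSolvableSub m S :=
  hS.imp fun n hn => Submodule.map_injective_of_injective hinj <| by
    rw [hf.map_derSeries, hn, Submodule.map_bot]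

theorem isStronglySolvable_map (hf : IsAlgHom m m' f) {S : Submodule F L}
    (hS : IsStronglySolvable m S) : IsStronglySolvable m' (S.map f) :=
  hS.imp fun k hk => by rw [← hf.map_mprod, ← hf.map_lcSeries, hk, Submodule.map_bot]

theorem exists_lcSeries_le_ker (hf : IsAlgHom m m' f) {S : Submodule F L}
    (hS : IsStronglySolvable m' (S.map f)) :
    ∃ k, lcSeries m (mprod m S S) k ≤ LinearMap.ker f :=
  hS.imp fun k hk => by
    rw [LinearMap.le_ker_iff_map, hf.map_lcSeries, hf.map_mprod, hk]

theorem isStronglySolvable_of_map (hf : IsAlgHom m m' f) (hinj : Function.Injective f)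
    {S : Submodule F L} (hS : IsStronglySolvable m' (S.map f)) : IsStronglySolvable m S :=
  (hf.exists_lcSeries_le_ker hS).imp fun _ hk =>
    le_bot_iff.1 (hk.trans_eq (LinearMap.ker_eq_bot.2 hinj))

theorem isLeibniz_of_injective (hf : IsAlgHom m m' f) (hinj : Function.Injective f)
    (hm' : IsLeibniz m') : IsLeibniz m := by
  intro a b c
  apply hinj
  rw [map_add, hf, hf, hf, hf, hf, hf, hm']

theorem isLeibniz_of_surjective (hf : IsAlgHom m m' f) (hsurj : Function.Surjective f)
    (hm : IsLeibniz m) : IsLeibniz m' := by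
  intro a b c
  obtain ⟨a, rfl⟩ := hsurj a
  obtain ⟨b, rfl⟩ := hsurj b
  obtain ⟨c, rfl⟩ := hsurj c
  simp only [← hf _ _, ← map_add, hm a b c]

end IsAlgHom

end Homomorphisms

section SubalgebrasAndQuotients

variable {F L : Type*} [Field F] [AddCommGroup L] [Module F L] {m : L →ₗ[F] L →ₗ[F] L}

/-- The multiplication of a subalgebra `S`, regarded as an algebra in its own right. -/
noncomputable def IsSubalg.mul {S : Submodule F L} (hS : IsSubalg m S) : S →ₗ[F] S →ₗ[F] S :=
  (m.domRestrict₁₂ S S).codRestrict₂ S.subtype S.injective_subtype fun x y => by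
    rw [Submodule.range_subtype]
    exact hS x x.2 y y.2

theorem IsSubalg.isAlgHom_subtype {S : Submodule F L} (hS : IsSubalg m S) :
    IsAlgHom hS.mul m S.subtype :=
  LinearMap.codRestrict₂_apply _ _ _ _

/-- The multiplication induced on the quotient by an ideal. -/
def IsIdeal.quotientMul {A : Submodule F L} (hA : IsIdeal m A) :
    (L ⧸ A) →ₗ[F] (L ⧸ A) →ₗ[F] (L ⧸ A) :=
  (m.compr₂ A.mkQ).liftQ₂ A A
    (fun x hx => LinearMap.ext fun y => (Submodule.Quotient.mk_eq_zero A).2 (hA y x hx).2)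
    (fun x hx => LinearMap.ext fun y => (Submodule.Quotient.mk_eq_zero A).2 (hA y x hx).1)

theorem IsIdeal.isAlgHom_mkQ {A : Submodule F L} (hA : IsIdeal m A) :
    IsAlgHom m hA.quotientMul A.mkQ :=
  fun _ _ => rfl

end SubalgebrasAndQuotients

section IrreducibleRepresentations

variable {F L V : Type*} [Field F] [AddCommGroup L] [Module F L] [AddCommGroup V] [Module F V]

/-- An irreducible representation of the left multiplications of `(L, m)`: a linear map
`ρ : L → End V` turning products into commutators and leaving no proper nonzero subspace of `V`
invariant. The zero space is allowed. -/
structure IsIrreducibleRep (m : L →ₗ[F] L →ₗ[F] L) (ρ : L →ₗ[F] End F V) : Prop where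
  map_mul : ∀ x y, ρ (m x y) = ρ x * ρ y - ρ y * ρ x
  eq_bot_or_eq_top : ∀ W : Submodule F V, (∀ x, ∀ w ∈ W, ρ x w ∈ W) → W = ⊥ ∨ W = ⊤

namespace IsIrreducibleRep

variable {m : L →ₗ[F] L →ₗ[F] L} {ρ : L →ₗ[F] End F V}

theorem commute_of_map_mul_eq_zero (hρ : IsIrreducibleRep m ρ) {x y : L} (h : ρ (m x y) = 0) :
    Commute (ρ x) (ρ y) :=
  sub_eq_zero.1 (hρ.map_mul x y ▸ h)

theorem maxGenEigenspace_zero_eq_top_or_ker_eq_bot (hρ : IsIrreducibleRep m ρ) {c : L}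
    (hc : ∀ x, Commute (ρ c) (ρ (m x c))) :
    (ρ c).maxGenEigenspace 0 = ⊤ ∨ LinearMap.ker (ρ c) = ⊥ := by
  have hstable : ∀ x, ∀ w ∈ (ρ c).maxGenEigenspace 0, ρ x w ∈ (ρ c).maxGenEigenspace 0 := by
    intro x
    refine mapsTo_maxGenEigenspace_of_commute_commutator ?_ 0
    rw [← neg_sub, ← hρ.map_mul]
    exact (hc x).neg_right
  refine (hρ.eq_bot_or_eq_top _ hstable).symm.imp_right fun hbot => ?_
  rw [← Module.End.eigenspace_zero, ← le_bot_iff, ← hbot]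
  exact Module.End.eigenspace_le_maxGenEigenspace

theorem le_ker_of_apply_eq_zero (hρ : IsIrreducibleRep m ρ) {Z : Submodule F L}
    (hZ : ∀ x, ∀ z ∈ Z, m x z ∈ Z) {v : V} (hv0 : v ≠ 0) (hv : ∀ z ∈ Z, ρ z v = 0) :
    Z ≤ LinearMap.ker ρ := by
  set W : Submodule F V := ⨅ z ∈ Z, LinearMap.ker (ρ z) with hW
  have mem_W : ∀ w, w ∈ W ↔ ∀ z ∈ Z, ρ z w = 0 := fun w => by
    simp only [hW, Submodule.mem_iInf, LinearMap.mem_ker]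
  have hstable : ∀ x, ∀ w ∈ W, ρ x w ∈ W := by
    intro x w hw
    rw [mem_W] at hw ⊢
    intro z hz
    have h := congrArg (· w) (hρ.map_mul x z)
    simpa only [hw z hz, hw _ (hZ x z hz), LinearMap.sub_apply, Module.End.mul_apply, map_zero,
      zero_sub, zero_eq_neg] using h
  have hWtop : W = ⊤ := (hρ.eq_bot_or_eq_top W hstable).resolve_left fun hbot =>
    hv0 ((Submodule.mem_bot F).1 (hbot ▸ (mem_W v).2 hv))
  exact fun z hz => LinearMap.ext fun w => (mem_W w).1 (hWtop ▸ trivial) z hz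

end IsIrreducibleRep

end IrreducibleRepresentations

section LeibnizIdentity

variable {F L : Type*} [Field F] [AddCommGroup L] [Module F L] {m : L →ₗ[F] L →ₗ[F] L}

namespace IsLeibniz

theorem mul_mul_eq_sub (hm : IsLeibniz m) (a b c : L) : m (m a b) c = m a (m b c) - m b (m a c) :=
  eq_sub_of_add_eq (hm a b c).symm

theorem mul_mem_mprod (hm : IsLeibniz m) {P Q : Submodule F L} (hP : ∀ x, ∀ y ∈ P, m x y ∈ P)
    (hQ : ∀ x, ∀ y ∈ Q, m x y ∈ Q) (x : L) : ∀ y ∈ mprod m P Q, m x y ∈ mprod m P Q := by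
  have hle : mprod m P Q ≤ (mprod m P Q).comap (m x) := by
    refine Submodule.map₂_le.2 fun p hp q hq => ?_
    rw [Submodule.mem_comap, hm]
    exact add_mem (Submodule.apply_mem_map₂ m (hP x p hp) hq)
      (Submodule.apply_mem_map₂ m hp (hQ x q hq))
  exact hle

theorem mul_mem_lcSeries (hm : IsLeibniz m) {P : Submodule F L} (hP : ∀ x, ∀ y ∈ P, m x y ∈ P)
    (k : ℕ) : ∀ x, ∀ y ∈ lcSeries m P k, m x y ∈ lcSeries m P k := by
  induction k with
  | zero => exact hP
  | succ k ih => exact hm.mul_mem_mprod hP ih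

theorem isIdeal_mprod_self (hm : IsLeibniz m) {A : Submodule F L} (hA : IsIdeal m A) :
    IsIdeal m (mprod m A A) := by
  have hleft : ∀ x, ∀ y ∈ A, m x y ∈ A := fun x y hy => (hA x y hy).1
  have hright : ∀ x, mprod m A A ≤ (mprod m A A).comap (m.flip x) := by
    refine fun x => Submodule.map₂_le.2 fun a ha b hb => ?_
    rw [Submodule.mem_comap, LinearMap.flip_apply, hm.mul_mul_eq_sub]
    exact sub_mem (Submodule.apply_mem_map₂ m ha (hA x b hb).2)
      (Submodule.apply_mem_map₂ m hb (hA x a ha).2)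
  exact fun x y hy => ⟨hm.mul_mem_mprod hleft hleft x y hy, hright x hy⟩

theorem isIdeal_ker (hm : IsLeibniz m) : IsIdeal m (LinearMap.ker m) := by
  intro x y hy
  rw [LinearMap.mem_ker] at hy
  constructor
  · refine LinearMap.ext fun z => ?_
    simp only [hm.mul_mul_eq_sub, hy, LinearMap.zero_apply, map_zero, sub_zero]
  · rw [hy, LinearMap.zero_apply]
    exact zero_mem _

theorem mul_add_mul_mem_ker (hm : IsLeibniz m) (a b : L) : m a b + m b a ∈ LinearMap.ker m := by
  refine LinearMap.ext fun c => ?_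
  rw [map_add, LinearMap.add_apply, hm.mul_mul_eq_sub, hm.mul_mul_eq_sub b a, sub_add_sub_cancel,
    sub_self, LinearMap.zero_apply]

end IsLeibniz

theorem IsIrreducibleRep.exists_ker_map_mul_eq_bot {V : Type*} [AddCommGroup V] [Module F V]
    [IsArtinian F V] [Nontrivial V] {ρ : L →ₗ[F] End F V} (hρ : IsIrreducibleRep m ρ)
    (hm : IsLeibniz m) {k : ℕ} (hk : lcSeries m (mprod m ⊤ ⊤) k ≤ LinearMap.ker ρ)
    (hne : ¬mprod m ⊤ ⊤ ≤ LinearMap.ker ρ) : ∃ x y, LinearMap.ker (ρ (m x y)) = ⊥ := by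
  obtain ⟨j, hj, hj'⟩ := Nat.exists_not_and_succ_of_not_zero_of_exists
    (p := fun j => lcSeries m (mprod m ⊤ ⊤) j ≤ LinearMap.ker ρ) hne ⟨k, hk⟩
  set Z := lcSeries m (mprod m ⊤ ⊤) j with hZ
  have hZ_stable : ∀ x, ∀ z ∈ Z, m x z ∈ Z :=
    hm.mul_mem_lcSeries (fun x y _ => mul_mem_mprod_top x y) j
  have hZ_comm : ∀ c ∈ Z, ∀ d ∈ Z, Commute (ρ c) (ρ d) := by
    intro c hc d hd
    have hcL : c ∈ mprod m ⊤ ⊤ := lcSeries_le (fun x _ y _ => mul_mem_mprod_top x y) j hc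
    exact hρ.commute_of_map_mul_eq_zero (hj' (Submodule.apply_mem_map₂ m hcL hd))
  by_contra! hker
  obtain ⟨v, hv0, hv⟩ := exists_ne_zero_forall_apply_eq_zero
    (s := {f | ∃ x y, m x y ∈ Z ∧ f = ρ (m x y)})
    (by
      rintro _ ⟨x, y, hxy, rfl⟩ _ ⟨x', y', hxy', rfl⟩
      exact hZ_comm _ hxy _ hxy')
    (by
      rintro _ ⟨x, y, hxy, rfl⟩
      exact (hρ.maxGenEigenspace_zero_eq_top_or_ker_eq_bot fun s =>
        hZ_comm _ hxy _ (hZ_stable s _ hxy)).resolve_right (hker x y))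
  obtain ⟨P, Q, hPQ⟩ := lcSeries_mprod_eq_mprod (m := m) ⊤ ⊤ j
  have hZ_eq : Z = mprod m P Q := hZ.trans hPQ
  have hZ_le : Z ≤ LinearMap.ker (ρ.flip v) :=
    hZ_eq.trans_le (Submodule.map₂_le.2 fun x hx y hy =>
      hv _ ⟨x, y, hZ_eq ▸ Submodule.apply_mem_map₂ m hx hy, rfl⟩)
  exact hj (hρ.le_ker_of_apply_eq_zero hZ_stable hv0 hZ_le)

theorem IsIdeal.inf {A B : Submodule F L} (hA : IsIdeal m A) (hB : IsIdeal m B) :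
    IsIdeal m (A ⊓ B) :=
  fun x y hy => ⟨⟨(hA x y hy.1).1, (hB x y hy.2).1⟩, ⟨(hA x y hy.1).2, (hB x y hy.2).2⟩⟩

/-- The action of `L` on an ideal by left multiplication. -/
noncomputable def IsIdeal.leftAction {A : Submodule F L} (hA : IsIdeal m A) : L →ₗ[F] End F A :=
  (m.compl₂ A.subtype).codRestrict₂ A.subtype A.injective_subtype fun x a => by
    rw [Submodule.range_subtype]
    exact (hA x a a.2).1

theorem IsIdeal.coe_leftAction_apply {A : Submodule F L} (hA : IsIdeal m A) (x : L) (a : A) :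
    (hA.leftAction x a : L) = m x a :=
  LinearMap.codRestrict₂_apply (m.compl₂ A.subtype) A.subtype A.injective_subtype _ x a

end LeibnizIdentity

section MinimalIdeals

variable {F L : Type*} [Field F] [AddCommGroup L] [Module F L] {m : L →ₗ[F] L →ₗ[F] L}
  {A : Submodule F L}

theorem exists_isMinIdeal (m : L →ₗ[F] L →ₗ[F] L) [IsArtinian F L] [Nontrivial L] :
    ∃ A, IsMinIdeal m A := by
  obtain ⟨A, ⟨hA, hA0⟩, hAmin⟩ := exists_minimal_of_wellFoundedLT
    (fun A : Submodule F L => IsIdeal m A ∧ A ≠ ⊥)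
    ⟨⊤, fun _ _ _ => ⟨trivial, trivial⟩, top_ne_bot⟩
  refine ⟨A, hA, hA0, fun J hJ hJA => or_iff_not_imp_left.2 fun hJ0 => ?_⟩
  exact hJA.antisymm (hAmin ⟨hJ, hJ0⟩ hJA)

namespace IsMinIdeal

theorem mprod_self_eq_bot (hA : IsMinIdeal m A) (hm : IsLeibniz m) (hsolv : IsSolvableSub m A) :
    mprod m A A = ⊥ :=
  (hA.2.2 _ (hm.isIdeal_mprod_self hA.1) (Submodule.map₂_le.2 fun a _ b hb => (hA.1 a b hb).1)
    ).resolve_right fun h => hA.2.1 (hsolv.eq_bot_of_mprod_self_eq h)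

theorem mul_eq_zero_or_mul_eq_neg (hA : IsMinIdeal m A) (hm : IsLeibniz m) :
    (∀ a ∈ A, ∀ x, m a x = 0) ∨ ∀ a ∈ A, ∀ x, m a x = -m x a := by
  rcases hA.2.2 _ (hA.1.inf hm.isIdeal_ker) inf_le_left with hbot | hA_le
  · right
    intro a ha x
    have hmem : m a x + m x a ∈ A ⊓ LinearMap.ker m :=
      ⟨add_mem (hA.1 x a ha).2 (hA.1 x a ha).1, hm.mul_add_mul_mem_ker a x⟩
    rw [hbot, Submodule.mem_bot] at hmem
    exact eq_neg_of_add_eq_zero_left hmem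
  · left
    intro a ha x
    have hker : m a = 0 := (inf_eq_left.1 hA_le) ha
    rw [hker, LinearMap.zero_apply]

theorem eq_bot_or_eq_of_forall_mul_mem (hA : IsMinIdeal m A) (hm : IsLeibniz m)
    {W : Submodule F L} (hWA : W ≤ A) (hW : ∀ x, ∀ w ∈ W, m x w ∈ W) : W = ⊥ ∨ W = A := by
  refine hA.2.2 W (fun x w hw => ⟨hW x w hw, ?_⟩) hWA
  rcases hA.mul_eq_zero_or_mul_eq_neg hm with h | h
  · rw [h w (hWA hw)]
    exact zero_mem W
  · rw [h w (hWA hw)]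
    exact neg_mem (hW x w hw)

theorem isIrreducibleRep_leftAction (hA : IsMinIdeal m A) (hm : IsLeibniz m) :
    IsIrreducibleRep m hA.1.leftAction where
  map_mul x y := by
    ext a
    simp only [LinearMap.sub_apply, Module.End.mul_apply, Submodule.coe_sub,
      hA.1.coe_leftAction_apply, hm.mul_mul_eq_sub]
  eq_bot_or_eq_top W hW := by
    have hstable : ∀ x, ∀ w ∈ W.map A.subtype, m x w ∈ W.map A.subtype := by
      rintro x _ ⟨w, hw, rfl⟩
      exact ⟨_, hW x w hw, hA.1.coe_leftAction_apply x w⟩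
    refine (hA.eq_bot_or_eq_of_forall_mul_mem hm (Submodule.map_subtype_le A W) hstable).imp
      (fun h => ?_) fun h => ?_ <;> apply Submodule.map_injective_of_injective A.injective_subtype
    · rw [h, Submodule.map_bot]
    · rw [h, Submodule.map_subtype_top]

end IsMinIdeal

end MinimalIdeals

section TwoGeneratedSubalgebras

variable {F L : Type*} [Field F] [AddCommGroup L] [Module F L] {m : L →ₗ[F] L →ₗ[F] L}
  {A : Submodule F L}

theorem IsStronglySolvable.disjoint_of_disjoint_ker {T : Submodule F L}
    (hT : IsStronglySolvable m T) {c : L} (hcT : c ∈ T) (hc : c ∈ mprod m T T)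
    (hA : ∀ a ∈ A, m c a ∈ A) (hker : Disjoint A (LinearMap.ker (m c))) : Disjoint T A := by
  obtain ⟨p, hp⟩ := hT
  refine Submodule.disjoint_def.2 fun t htT htA => ?_
  have hpow := pow_succ_apply_mem_lcSeries_mprod hcT hc htT p
  rw [hp, Submodule.mem_bot] at hpow
  exact LinearMap.disjoint_ker.1 (disjoint_ker_pow hA hker (p + 1)) t htA hpow

theorem pow_succ_mul_apply_eq_zero_of_mem_genBy {u v t : L} (hA : IsIdeal m A) {k : ℕ}
    (hk : lcSeries m (mprod m ⊤ ⊤) k ≤ A) (hT : IsStronglySolvable m (genBy m {u, v}))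
    (hker : Disjoint A (LinearMap.ker (m (m u v)))) (ht : t ∈ genBy m {u, v}) :
    ((m (m u v) : End F L) ^ (k + 1)) t = 0 := by
  have hu : u ∈ genBy m {u, v} := subset_genBy m _ (Set.mem_insert u {v})
  have hv : v ∈ genBy m {u, v} := subset_genBy m _ (Set.mem_insert_of_mem u rfl)
  have hmem := isSubalg_genBy m {u, v}
  have hdisj : Disjoint (genBy m {u, v}) A :=
    hT.disjoint_of_disjoint_ker (hmem u hu v hv) (Submodule.apply_mem_map₂ m hu hv)
      (fun a ha => (hA _ a ha).1) hker
  refine Submodule.disjoint_def.1 hdisj _ ?_ (hk ?_)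
  · exact Module.End.pow_apply_mem_of_forall_mem (k + 1) (hmem _ (hmem u hu v hv)) t ht
  · exact pow_succ_apply_mem_lcSeries_mprod Submodule.mem_top (mul_mem_mprod_top u v)
      Submodule.mem_top k

theorem IsIdeal.exists_mul_add_mul_eq_zero [FiniteDimensional F A] (hA : IsIdeal m A)
    (hA0 : A ≠ ⊥) (x y : L) :
    ∃ a ∈ A, ∃ b ∈ A, m x b + m a y = 0 ∧ ¬(a = 0 ∧ b = 0) := by
  let φ : A × A →ₗ[F] A :=
    ((m.flip y).restrict fun a ha => (hA y a ha).2).coprod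
      ((m x).restrict fun b hb => (hA x b hb).1)
  have hrank : finrank F A < finrank F (A × A) := by
    have hpos : finrank F A ≠ 0 := Submodule.finrank_eq_zero.not.2 hA0
    rw [Module.finrank_prod]
    lia
  obtain ⟨⟨a, b⟩, hφ, hab⟩ := Submodule.exists_mem_ne_zero_of_ne_bot
    (LinearMap.ker_ne_bot_of_finrank_lt (f := φ) hrank)
  refine ⟨a, a.2, b, b.2, ?_, fun ⟨ha, hb⟩ => hab (Prod.ext (Subtype.ext ha) (Subtype.ext hb))⟩
  rw [add_comm]
  exact congrArg Subtype.val hφ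

theorem IsIdeal.not_disjoint_ker_mul [FiniteDimensional F A] (hA : IsIdeal m A)
    (hAA : mprod m A A = ⊥) (hA0 : A ≠ ⊥) {k : ℕ} (hk : lcSeries m (mprod m ⊤ ⊤) k ≤ A)
    (h2gen : ∀ u v, IsStronglySolvable m (genBy m {u, v})) (x y : L) :
    ¬Disjoint A (LinearMap.ker (m (m x y))) := by
  intro hker
  obtain ⟨a, ha, b, hb, hsum, hab⟩ := hA.exists_mul_add_mul_eq_zero hA0 x y
  have hmul_ab : m a b = 0 := (Submodule.mem_bot F).1 (hAA ▸ Submodule.apply_mem_map₂ m ha hb)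
  have hmul : m (x + a) (y + b) = m x y := by
    rw [map_add, map_add, LinearMap.add_apply, LinearMap.add_apply, hmul_ab, add_zero, add_assoc,
      add_comm (m a y), hsum, add_zero]
  have hkill : ∀ u v, m u v = m x y →
      ((m (m x y) : End F L) ^ (k + 1)) u = 0 ∧ ((m (m x y) : End F L) ^ (k + 1)) v = 0 := by
    intro u v huv
    rw [← huv] at hker ⊢
    have hzero := fun t => pow_succ_mul_apply_eq_zero_of_mem_genBy (t := t) hA hk (h2gen u v) hker
    exact ⟨hzero u (subset_genBy m _ (Set.mem_insert u {v})),
      hzero v (subset_genBy m _ (Set.mem_insert_of_mem u rfl))⟩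
  obtain ⟨hx, hy⟩ := hkill x y rfl
  obtain ⟨hxa, hyb⟩ := hkill (x + a) (y + b) hmul
  rw [map_add, hx, zero_add] at hxa
  rw [map_add, hy, zero_add] at hyb
  have hinj := LinearMap.disjoint_ker.1
    (disjoint_ker_pow (fun c hc => (hA (m x y) c hc).1) hker (k + 1))
  exact hab ⟨hinj a ha hxa, hinj b hb hyb⟩

theorem IsMinIdeal.isStronglySolvable_top [FiniteDimensional F A] (hA : IsMinIdeal m A)
    (hm : IsLeibniz m) (hAA : mprod m A A = ⊥) {k : ℕ} (hk : lcSeries m (mprod m ⊤ ⊤) k ≤ A)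
    (h2gen : ∀ u v, IsStronglySolvable m (genBy m {u, v})) : IsStronglySolvable m ⊤ := by
  have hρ := hA.isIrreducibleRep_leftAction hm
  have mem_ker : ∀ z, z ∈ LinearMap.ker hA.1.leftAction ↔ ∀ a ∈ A, m z a = 0 := fun z => by
    simp only [LinearMap.mem_ker, LinearMap.ext_iff, Subtype.ext_iff, hA.1.coe_leftAction_apply,
      LinearMap.zero_apply, ZeroMemClass.coe_zero, Subtype.forall]
  by_cases htriv : mprod m ⊤ ⊤ ≤ LinearMap.ker hA.1.leftAction
  · refine ⟨k + 1, le_bot_iff.1 (Submodule.map₂_le.2 fun z hz a ha => ?_)⟩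
    exact (Submodule.mem_bot F).2 ((mem_ker z).1 (htriv hz) a (hk ha))
  · have : Nontrivial A := Submodule.nontrivial_iff_ne_bot.2 hA.2.1
    have hk_ker : lcSeries m (mprod m ⊤ ⊤) k ≤ LinearMap.ker hA.1.leftAction := fun z hz =>
      (mem_ker z).2 fun a ha =>
        (Submodule.mem_bot F).1 (hAA ▸ Submodule.apply_mem_map₂ m (hk hz) ha)
    obtain ⟨x, y, hxy⟩ := hρ.exists_ker_map_mul_eq_bot hm hk_ker htriv
    refine absurd ?_ (hA.1.not_disjoint_ker_mul hAA hA.2.1 hk h2gen x y)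
    refine LinearMap.disjoint_ker.2 fun a ha hxya => ?_
    have hzero : hA.1.leftAction (m x y) ⟨a, ha⟩ = 0 :=
      Subtype.ext ((hA.1.coe_leftAction_apply _ _).trans hxya)
    exact congrArg Subtype.val (LinearMap.ker_eq_bot'.1 hxy _ hzero)

theorem isStronglySolvable_top_of_forall_genBy_pair [FiniteDimensional F L] (hm : IsLeibniz m)
    (hsolv : IsSolvableAlg m) (h2gen : ∀ x y, IsStronglySolvable m (genBy m {x, y})) :
    IsStronglySolvable m ⊤ := by
  induction hn : finrank F L using Nat.strong_induction_on generalizing L with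
  | _ n ih =>
  rcases subsingleton_or_nontrivial L with _ | _
  · exact ⟨0, Subsingleton.elim _ _⟩
  obtain ⟨A, hA⟩ := exists_isMinIdeal m
  have hπ := hA.1.isAlgHom_mkQ
  have hπ_top : (⊤ : Submodule F L).map A.mkQ = ⊤ := by
    rw [Submodule.map_top, Submodule.range_mkQ]
  have hlt : finrank F (L ⧸ A) < n := by
    have hpos : finrank F A ≠ 0 := Submodule.finrank_eq_zero.not.2 hA.2.1
    have hadd := A.finrank_quotient_add_finrank
    lia
  have hsolv_quot : IsSolvableAlg hA.1.quotientMul := by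
    rw [IsSolvableAlg, ← hπ_top]
    exact hπ.isSolvableSub_map hsolv
  have hquot : IsStronglySolvable hA.1.quotientMul ⊤ := by
    refine ih _ hlt (hπ.isLeibniz_of_surjective A.mkQ_surjective hm) hsolv_quot (fun x y => ?_) rfl
    obtain ⟨x, rfl⟩ := A.mkQ_surjective x
    obtain ⟨y, rfl⟩ := A.mkQ_surjective y
    rw [← Set.image_pair, ← hπ.map_genBy]
    exact hπ.isStronglySolvable_map (h2gen x y)
  obtain ⟨k, hk⟩ := hπ.exists_lcSeries_le_ker (hπ_top.symm ▸ hquot)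
  rw [Submodule.ker_mkQ] at hk
  exact hA.isStronglySolvable_top hm (hA.mprod_self_eq_bot hm (hsolv.mono le_top)) hk h2gen

theorem proper_subalgebras_strongly_solvable_general (hm : IsLeibniz m) {S : Submodule F L}
    [FiniteDimensional F S] (hS : IsSubalg m S) (hsolv : IsSolvableSub m S)
    (h2gen : ∀ T ≤ S, TwoGenerated m T → IsStronglySolvable m T) : IsStronglySolvable m S := by
  have hι := hS.isAlgHom_subtype
  have hι_inj := S.injective_subtype
  have hι_top : (⊤ : Submodule F S).map S.subtype = S := Submodule.map_subtype_top S
  rw [← hι_top]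
  refine hι.isStronglySolvable_map (isStronglySolvable_top_of_forall_genBy_pair
    (hι.isLeibniz_of_injective hι_inj hm)
    (hι.isSolvableSub_of_map hι_inj (hι_top.symm ▸ hsolv)) fun x y => ?_)
  refine hι.isStronglySolvable_of_map hι_inj
    (h2gen _ (Submodule.map_subtype_le S _) ⟨x, y, ?_⟩)
  rw [hι.map_genBy, Set.image_pair, Submodule.subtype_apply, Submodule.subtype_apply]

end TwoGeneratedSubalgebras

/-- Let `L` be a finite-dimensional solvable Leibniz algebra such that
every two-generated proper subalgebra of `L` is strongly solvable. Then every proper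
subalgebra of `L` is strongly solvable. -/
theorem proper_subalgebras_strongly_solvable
    {F : Type*} [Field F] {L : Type*} [AddCommGroup L] [Module F L]
    [FiniteDimensional F L]
    (m : L →ₗ[F] L →ₗ[F] L) (hm : IsLeibniz m)
    (hsolv : IsSolvableAlg m)
    (h2gen : ∀ S : Submodule F L, IsSubalg m S → S ≠ ⊤ → TwoGenerated m S →
      IsStronglySolvable m S) :
    ∀ S : Submodule F L, IsSubalg m S → S ≠ ⊤ → IsStronglySolvable m S :=
  fun _ hS hne => proper_subalgebras_strongly_solvable_general hm hS (hsolv.mono le_top)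
    fun T hTS hT => h2gen T hT.isSubalg (ne_top_of_le_ne_top hne hTS) hT
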